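/- For every i ∈ ℕ, with ω_i = 2i + 3, one has ∫₀^{π/2} cos²(ω_i x)·tan²(x) dx = (π/2)·(ω_i − 1/2) and ∫₀^{π/2} sin²(ω_i x)·cos²(x)/sin²(x) dx = (π/2)·(ω_i − 1/2). -/

import Mathlib

open Real MeasureTheory

/-- The AdS linearized eigenvalue `ω_i = 2i + 3`. -/
noncomputable def ω (i : ℕ) : ℝ := 2 * i + 3

lemma aux_cos_int (m : ℕ) (hm : 0 < m) :
    ∫ x in (0:ℝ)..(π/2), Real.cos (2 * (m:ℝ) * x) = 0 := by
  have h : (2 * (m:ℝ)) ≠ 0 := by positivity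
  rw [intervalIntegral.integral_comp_mul_left (fun x => Real.cos x) h, integral_cos]
  have : 2 * (m:ℝ) * (π/2) = m * π := by ring
  rw [this, Real.sin_nat_mul_pi]
  simp

lemma aux_fejer (n : ℕ) : 
    (∃ g : ℝ → ℝ, Continuous g ∧ (∀ x, g x * Real.sin x ^ 2 = Real.sin ((n:ℝ) * x) ^ 2) ∧
      ∫ x in (0:ℝ)..(π/2), g x = n * (π/2)) ∧
    (∃ g : ℝ → ℝ, Continuous g ∧ (∀ x, g x * Real.sin x ^ 2 = Real.sin (((n+1:ℕ):ℝ) * x) ^ 2) ∧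
      ∫ x in (0:ℝ)..(π/2), g x = ((n+1:ℕ):ℝ) * (π/2)) := by
  induction n with
  | zero =>
    exact ⟨⟨fun _ => 0, continuous_const, by simp, by simp⟩,
      ⟨fun _ => 1, continuous_const, by simp, by simp⟩⟩
  | succ n ih =>
    obtain ⟨⟨g, hg, hg1, hg2⟩, ⟨k, hk, hk1, hk2⟩⟩ := ih
    refine ⟨⟨k, hk, hk1, hk2⟩, ?_⟩
    have hc : Continuous (fun x : ℝ => Real.cos (2 * ((n+1:ℕ):ℝ) * x)) := by fun_prop
    refine ⟨fun x => 2 * k x - g x + 2 * Real.cos (2 * ((n+1:ℕ):ℝ) * x), by fun_prop, ?_, ?_⟩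
    · intro x
      have e1 : (2 * k x - g x + 2 * Real.cos (2 * ((n+1:ℕ):ℝ) * x)) * Real.sin x ^ 2
        = 2 * (k x * Real.sin x ^ 2) - g x * Real.sin x ^ 2
          + 2 * Real.cos (2 * ((n+1:ℕ):ℝ) * x) * Real.sin x ^ 2 := by ring
      rw [e1, hg1, hk1]
      set a : ℝ := ((n+1:ℕ):ℝ) * x with ha
      have h1 : (n:ℝ) * x = a - x := by rw [ha]; push_cast; ring
      have h2 : ((n+1+1:ℕ):ℝ) * x = a + x := by rw [ha]; push_cast; ring
      have h3 : 2 * ((n+1:ℕ):ℝ) * x = 2 * a := by rw [ha]; ring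
      rw [h1, h2, h3, Real.sin_sub, Real.sin_add, Real.cos_two_mul]
      have s1 := Real.sin_sq a
      have s2 := Real.sin_sq x
      ring_nf
      rw [s1, s2]
      ring
    · rw [intervalIntegral.integral_add, intervalIntegral.integral_sub,
        intervalIntegral.integral_const_mul, intervalIntegral.integral_const_mul,
        aux_cos_int _ (Nat.succ_pos n), hg2, hk2]
      · push_cast; ring
      all_goals exact Continuous.intervalIntegrable (by fun_prop) _ _

lemma aux_second (n : ℕ) (hn : 0 < n) :
    ∫ x in (0:ℝ)..(π/2), Real.sin ((n:ℝ) * x) ^ 2 * Real.cos x ^ 2 / Real.sin x ^ 2 =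
      π / 2 * ((n:ℝ) - 1 / 2) := by
  obtain ⟨g, hg, hg1, hg2⟩ := (aux_fejer n).1
  have hc : Continuous (fun x : ℝ => Real.cos (2 * (n:ℝ) * x)) := by fun_prop
  have : ∫ x in (0:ℝ)..(π/2), Real.sin ((n:ℝ) * x) ^ 2 * Real.cos x ^ 2 / Real.sin x ^ 2 =
      ∫ x in (0:ℝ)..(π/2), (g x - (1/2 - 1/2 * Real.cos (2 * (n:ℝ) * x))) := by
    rw [intervalIntegral.integral_of_le (by positivity),
      intervalIntegral.integral_of_le (by positivity)]
    refine setIntegral_congr_fun measurableSet_Ioc ?_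
    intro x hx
    have hs : Real.sin x ≠ 0 :=
      (Real.sin_pos_of_pos_of_lt_pi hx.1 (by linarith [hx.2, Real.pi_pos])).ne'
    have h3 : 1/2 - 1/2 * Real.cos (2 * (n:ℝ) * x) = g x * Real.sin x ^ 2 := by
      rw [hg1, mul_assoc, Real.cos_two_mul, Real.sin_sq]; ring
    simp only
    rw [h3, ← hg1, Real.cos_sq']
    field_simp
  rw [this, intervalIntegral.integral_sub, intervalIntegral.integral_sub,
    intervalIntegral.integral_const_mul, aux_cos_int n hn, hg2, intervalIntegral.integral_const]
  · simp; ring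
  all_goals exact Continuous.intervalIntegrable (by fun_prop) _ _

/-- For every `i ∈ ℕ`, `∫₀^{π/2} cos²(ω_i x)·tan²(x) dx = (π/2)·(ω_i − 1/2)` and
`∫₀^{π/2} sin²(ω_i x)·cos²(x)/sin²(x) dx = (π/2)·(ω_i − 1/2)`. -/
theorem weighted_trig_square_integrals (i : ℕ) :
    (∫ x in Set.Ioo (0 : ℝ) (Real.pi / 2),
        Real.cos (ω i * x) ^ 2 * Real.tan x ^ 2) =
      Real.pi / 2 * (ω i - 1 / 2) ∧
    (∫ x in Set.Ioo (0 : ℝ) (Real.pi / 2),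
        Real.sin (ω i * x) ^ 2 * Real.cos x ^ 2 / Real.sin x ^ 2) =
      Real.pi / 2 * (ω i - 1 / 2) := by
  have hω : ω i = ((2 * i + 3 : ℕ) : ℝ) := by simp [ω]
  have h2 := aux_second (2 * i + 3) (by omega)
  rw [← hω] at h2
  rw [← integral_Ioc_eq_integral_Ioo, ← integral_Ioc_eq_integral_Ioo,
    ← intervalIntegral.integral_of_le (by positivity),
    ← intervalIntegral.integral_of_le (by positivity)]
  refine ⟨?_, h2⟩
  rw [← h2]
  have h := intervalIntegral.integral_comp_sub_left (a := 0) (b := π/2)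
    (fun x => Real.cos (ω i * x) ^ 2 * Real.tan x ^ 2) (π/2)
  rw [sub_self, sub_zero] at h
  rw [← h]
  congr 1
  funext x
  have e : ω i * (π/2 - x) = (π/2 - ω i * x) + ((i+1:ℕ):ℝ) * π := by
    simp only [ω]; push_cast; ring
  rw [e, Real.cos_add_nat_mul_pi, Real.cos_pi_div_two_sub, Real.tan_eq_sin_div_cos,
    Real.sin_pi_div_two_sub, Real.cos_pi_div_two_sub, mul_pow, ← pow_mul, mul_comm (i+1) 2, pow_mul]
  norm_num
  ring
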